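/- Let D be a regular domain. If Π(a_1, a_m) is a singleton set (exactly one vertex-path of G_≈^A(D) connects a_1 and a_m), then every preference in D is single-peaked w.r.t. ≺, and D is a hybrid* domain. -/

import Mathlib

/-!
Call `b` a separator of `c` and `a` if every walk of the strong-connection graph from `c` to `a`
meets `b`. In a minimally rich no-restoration domain a separator `b` of `r₁(P)` and `a` satisfies
`b P a`: otherwise, along a path without `{b, a}`-restoration from `P` to a preference with top
`a`, the alternative `b` is never on top, so the tops trace a walk avoiding `b`. Applied to the
two completely reversed preferences, this says that a separator of `a₁` and `a` lies weakly to the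
left of `a`, and a separator of `a_m` and `a` weakly to its right.

Suppose the path from `a₁` to `a_m` is unique. An alternative `t` off this path would be jumped by
an edge `x ≈ y` of the path with `x ≺ t ≺ y`. A detour from `a₁` to `a_m` through `t` must use this
edge, either before `t` or after it. Hence `y` separates `a₁` from `t` or `x` separates `a_m` from
`t`, and both contradict the order. So every alternative lies on the path and separates `a₁` from
`a_m`, which forces it to separate everything on its left from everything on its right.
-/

open Finset

noncomputable section

/-- A preference is a linear order over the `m` alternatives, represented as a bijection
from rank positions (0-based: position `0` is the top) to alternatives. -/
abbrev Pref (m : ℕ) := Fin m ≃ Fin m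

namespace PFBRPaper

variable {m n : ℕ}

/-- `a` is strictly preferred to `b` under `P`. -/
def Prefers (P : Pref m) (a b : Fin m) : Prop := P.symm a < P.symm b

/-- The last alternative `a_m` (0-based index `m-1`). -/
def lastAlt (m : ℕ) [NeZero m] : Fin m :=
  ⟨m - 1, Nat.sub_lt (Nat.pos_of_ne_zero (NeZero.ne m)) Nat.one_pos⟩

/-- Every alternative is top-ranked by some preference in the domain. -/
def MinimallyRich [NeZero m] (D : Set (Pref m)) : Prop :=
  ∀ a : Fin m, ∃ P ∈ D, P 0 = a

/-- The preference ranking `a_m` first, ..., `a_1` last. -/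
def revPref (m : ℕ) : Pref m :=
  ⟨Fin.rev, Fin.rev, fun i => Fin.rev_rev i, fun i => Fin.rev_rev i⟩

/-- Diversity, with the labeling convention: the domain contains the preference ranking
`a_1` first, `a_2` second, ..., `a_m` last (the identity), together with its
complete reversal. -/
def Diversity (D : Set (Pref m)) : Prop :=
  Equiv.refl (Fin m) ∈ D ∧ revPref m ∈ D

/-- Two preferences are adjacent: the alternatives at two contiguous rank positions are
swapped and everything else is unchanged. -/
def Adjacent (P P' : Pref m) : Prop :=
  P ≠ P' ∧ ∃ k : ℕ, ∃ hk : k + 1 < m,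
    P ⟨k, Nat.lt_of_succ_lt hk⟩ = P' ⟨k + 1, hk⟩ ∧
    P ⟨k + 1, hk⟩ = P' ⟨k, Nat.lt_of_succ_lt hk⟩ ∧
    ∀ l : Fin m, (l : ℕ) ≠ k → (l : ℕ) ≠ k + 1 → P l = P' l

/-- `π 0, …, π (v-1)` is a path in `D` connecting `P` and `P'`. -/
def IsPath (D : Set (Pref m)) (P P' : Pref m) (π : ℕ → Pref m) (v : ℕ) : Prop :=
  1 ≤ v ∧ (∀ i < v, π i ∈ D) ∧
  (∀ i < v, ∀ j < v, π i = π j → i = j) ∧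
  π 0 = P ∧ π (v - 1) = P' ∧
  ∀ i, i + 1 < v → Adjacent (π i) (π (i + 1))

/-- The path `π 0, …, π (v-1)` has no `{a,b}`-restoration: the relative ranking of
`a` and `b` switches at most once along the path. -/
def NoRestoration (π : ℕ → Pref m) (v : ℕ) (a b : Fin m) : Prop :=
  ∀ i j k : ℕ, i < j → j < k → k < v →
    ¬(Prefers (π i) a b ∧ Prefers (π j) b a ∧ Prefers (π k) a b) ∧
    ¬(Prefers (π i) b a ∧ Prefers (π j) a b ∧ Prefers (π k) b a)

def NoRestorationDomain (D : Set (Pref m)) : Prop :=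
  ∀ P ∈ D, ∀ P' ∈ D, P ≠ P' → ∀ a b : Fin m,
    ∃ π v, IsPath D P P' π v ∧ NoRestoration π v a b

def RegularDomain [NeZero m] (D : Set (Pref m)) : Prop :=
  MinimallyRich D ∧ Diversity D ∧ NoRestorationDomain D

/-- `a ≈ b`: the two alternatives are strongly connected in the domain `D`. -/
def StronglyConnected [NeZero m] (D : Set (Pref m)) (a b : Fin m) : Prop :=
  a ≠ b ∧ ∃ P ∈ D, ∃ P' ∈ D,
    P 0 = a ∧ P 1 = b ∧ P' 0 = b ∧ P' 1 = a ∧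
    ∀ k : Fin m, 2 ≤ (k : ℕ) → P k = P' k

/-- `l` is a vertex-path of the graph `G_≈^B(D)`. -/
def IsVertexPathOn [NeZero m] (D : Set (Pref m)) (B : Set (Fin m)) (l : List (Fin m)) : Prop :=
  l ≠ [] ∧ l.Nodup ∧ (∀ x ∈ l, x ∈ B) ∧ l.Chain' (StronglyConnected D)

/-- `l` is a vertex-path of `G_≈^B(D)` connecting `a` and `b`. -/
def VertexPathBetween [NeZero m] (D : Set (Pref m)) (B : Set (Fin m)) (a b : Fin m)
    (l : List (Fin m)) : Prop :=
  IsVertexPathOn D B l ∧ l.head? = some a ∧ l.getLast? = some b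

/-- `a` is a leaf of the subgraph `G_≈^B(D)`. -/
def IsLeaf [NeZero m] (D : Set (Pref m)) (B : Set (Fin m)) (a : Fin m) : Prop :=
  a ∈ B ∧ ∃! b : Fin m, b ∈ B ∧ StronglyConnected D a b

/-- Single-peakedness w.r.t. the natural order. -/
def SinglePeaked [NeZero m] (P : Pref m) : Prop :=
  ∀ a b : Fin m, ((a < b ∧ b < P 0) ∨ (P 0 < b ∧ b < a)) → Prefers P b a

/-- A `(p,q)`-hybrid preference (thresholds `p < q`, 0-based). -/
def IsHybridPref [NeZero m] (p q : Fin m) (P : Pref m) : Prop :=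
  (∀ r s : Fin m, ((r ≤ p ∧ s ≤ p) ∨ (q ≤ r ∧ q ≤ s)) →
      ((r < s ∧ s < P 0) ∨ (P 0 < s ∧ s < r)) → Prefers P s r) ∧
  (P 0 ≤ p → ∀ l : Fin m, p ≤ l → l ≤ q → l ≠ p → Prefers P p l) ∧
  (q ≤ P 0 → ∀ l : Fin m, p ≤ l → l ≤ q → l ≠ q → Prefers P q l)

/-- The `(p,q)`-hybrid domain of all `(p,q)`-hybrid preferences. -/
def hybridDomain [NeZero m] (p q : Fin m) : Set (Pref m) := {P | IsHybridPref p q P}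

/-- `D` is a `(p,q)`-hybrid* domain. -/
def IsHybridStar [NeZero m] (D : Set (Pref m)) (p q : Fin m) : Prop :=
  D ⊆ hybridDomain p q ∧
  (∀ k : Fin m, k ≠ 0 → k ≠ lastAlt m →
      ∃ l, VertexPathBetween D Set.univ 0 (lastAlt m) l ∧ k ∈ l) ∧
  ((p : ℕ) + 1 < (q : ℕ) → ∀ a : Fin m, ¬ IsLeaf D (Set.Icc p q) a)

/-- A lottery over the alternatives. -/
def Lottery (m : ℕ) : Type :=
  {f : Fin m → ℝ // (∀ a, 0 ≤ f a) ∧ ∑ a, f a = 1}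

/-- The probability that a lottery assigns to a set of alternatives. -/
def Lottery.prob (lam : Lottery m) (B : Finset (Fin m)) : ℝ := ∑ a ∈ B, lam.1 a

/-- The support of a lottery. -/
def Lottery.supp (lam : Lottery m) : Finset (Fin m) :=
  Finset.univ.filter (fun a => 0 < lam.1 a)

/-- The degenerate lottery on `a`. -/
def degLottery (a : Fin m) : Lottery m :=
  ⟨fun b => if b = a then 1 else 0,
   fun b => by by_cases h : b = a <;> simp [h],
   by simp⟩

/-- A profile of preferences drawn from the domain `D`. -/
abbrev Profile (D : Set (Pref m)) (n : ℕ) := Fin n → D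

/-- The top-ranked alternative of a preference in the domain. -/
def topOf [NeZero m] {D : Set (Pref m)} (P : D) : Fin m := P.1 0

def Unanimous [NeZero m] {D : Set (Pref m)} (φ : Profile D n → Lottery m) : Prop :=
  ∀ (P : Profile D n) (a : Fin m), (∀ i, topOf (P i) = a) → φ P = degLottery a

/-- The total probability of the `k` top-ranked alternatives of `P` under `lam`. -/
def topSum (lam : Lottery m) (P : Pref m) (k : ℕ) : ℝ :=
  ∑ t ∈ Finset.univ.filter (fun t : Fin m => (t : ℕ) < k), lam.1 (P t)

/-- Strategy-proofness: truth-telling first-order stochastically dominates any unilateral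
misrepresentation. -/
def StrategyProof {D : Set (Pref m)} (φ : Profile D n → Lottery m) : Prop :=
  ∀ (i : Fin n) (P : Profile D n) (Pi' : D) (k : ℕ), k ≤ m →
    topSum (φ (Function.update P i Pi')) (P i).1 k ≤ topSum (φ P) (P i).1 k

def TopsOnly [NeZero m] {D : Set (Pref m)} (φ : Profile D n → Lottery m) : Prop :=
  ∀ P P' : Profile D n, (∀ i, topOf (P i) = topOf (P' i)) → φ P = φ P'

def Anonymous {D : Set (Pref m)} (φ : Profile D n → Lottery m) : Prop :=
  ∀ (P : Profile D n) (σ : Equiv.Perm (Fin n)), φ (P ∘ σ) = φ P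

/-- The interval `[a_k, a_m]`. -/
def upSet (k : Fin m) : Finset (Fin m) := Finset.univ.filter (fun a => k ≤ a)

/-- The interval `[a_1, a_k]`. -/
def downSet (k : Fin m) : Finset (Fin m) := Finset.univ.filter (fun a => a ≤ k)

/-- The interval `[a_p, a_q]`. -/
def midSet (p q : Fin m) : Finset (Fin m) := Finset.univ.filter (fun a => p ≤ a ∧ a ≤ q)

/-- `S(k,P)`: the voters whose preference top is not to the left of `a_k`. -/
def voterSet [NeZero m] {D : Set (Pref m)} (P : Profile D n) (k : Fin m) : Finset (Fin n) :=
  Finset.univ.filter (fun i => k ≤ topOf (P i))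

/-- `β_{S(k,P)}([a_k, a_m])`, with the convention that it is `0` for `k = m`. -/
def tailProb [NeZero m] {D : Set (Pref m)} (β : Finset (Fin n) → Lottery m)
    (P : Profile D n) (k : ℕ) : ℝ :=
  if h : k < m then (β (voterSet P ⟨k, h⟩)).prob (upSet ⟨k, h⟩) else 0

def BallotUnanimity [NeZero m] (β : Finset (Fin n) → Lottery m) : Prop :=
  β Finset.univ = degLottery (lastAlt m) ∧ β ∅ = degLottery 0

def BallotMonotone (β : Finset (Fin n) → Lottery m) : Prop :=
  ∀ S T : Finset (Fin n), S ⊂ T →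
    ∀ k : Fin m, (β S).prob (upSet k) ≤ (β T).prob (upSet k)

/-- `φ` is a probabilistic fixed ballot rule with probabilistic ballots `β`. -/
def IsPFBRWith [NeZero m] {D : Set (Pref m)} (φ : Profile D n → Lottery m)
    (β : Finset (Fin n) → Lottery m) : Prop :=
  BallotUnanimity β ∧ BallotMonotone β ∧
  ∀ (P : Profile D n) (k : Fin m),
    (φ P).1 k = tailProb β P (k : ℕ) - tailProb β P ((k : ℕ) + 1)

def IsPFBR [NeZero m] {D : Set (Pref m)} (φ : Profile D n → Lottery m) : Prop :=
  ∃ β, IsPFBRWith φ β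

/-- The constrained random-dictatorship condition w.r.t. `a_p` and `a_q`. -/
def ConstrainedRD (p q : Fin m) (β : Finset (Fin n) → Lottery m) : Prop :=
  ∃ ε : Fin n → ℝ, (∀ i, 0 ≤ ε i) ∧ ∑ i, ε i = 1 ∧
    ∀ S : Finset (Fin n),
      (β S).prob (upSet q) = ∑ i ∈ S, ε i ∧
      (β S).prob (downSet p) = ∑ i ∈ Sᶜ, ε i

/-- The constrained random-dictatorship condition w.r.t. `a_p` and `a_q` with every
conditional dictatorial coefficient equal to `1/n`. -/
def ConstrainedRDUniform (p q : Fin m) (β : Finset (Fin n) → Lottery m) : Prop :=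
  ∀ S : Finset (Fin n),
    (β S).prob (upSet q) = (S.card : ℝ) / (n : ℝ) ∧
    (β S).prob (downSet p) = ((Sᶜ : Finset (Fin n)).card : ℝ) / (n : ℝ)

/-- Anonymity at the level of probabilistic ballots. -/
def BallotAnonymous (β : Finset (Fin n) → Lottery m) : Prop :=
  ∀ S S' : Finset (Fin n), S.Nonempty → S'.Nonempty → S.card = S'.card → β S = β S'

/-- Per-capita monotonicity w.r.t. `a_p` and `a_q`. -/
def PerCapitaMonotone (p q : Fin m) (β : Finset (Fin n) → Lottery m) : Prop :=
  ∀ S S' : Finset (Fin n), S.Nonempty → S ⊂ S' → S' ⊂ Finset.univ →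
    (∀ t : Fin m, q ≤ t →
      (β S).prob (upSet t) / (S.card : ℝ) ≤ (β S').prob (upSet t) / (S'.card : ℝ)) ∧
    (∀ s : Fin m, s ≤ p →
      (β Sᶜ).prob (downSet s) / (S.card : ℝ) ≤ (β S'ᶜ).prob (downSet s) / (S'.card : ℝ))

/-- Decomposability: `φ` is a mixture of finitely many unanimous and strategy-proof
deterministic social choice functions. -/
def Decomposable [NeZero m] {D : Set (Pref m)} (φ : Profile D n → Lottery m) : Prop :=
  ∃ (r : ℕ) (f : Fin r → (Profile D n → Fin m)) (α : Fin r → ℝ),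
    (∀ k, 0 < α k) ∧ ∑ k, α k = 1 ∧
    (∀ k, Unanimous (fun P => degLottery (f k P)) ∧
          StrategyProof (fun P => degLottery (f k P))) ∧
    ∀ (P : Profile D n) (a : Fin m),
      (φ P).1 a = ∑ k, α k * (if f k P = a then 1 else 0)

/-- `b̂_S^R`: the `≺`-minimum of `supp(β_S) ∩ R` (with the convention `b̂_N^R = a_m`). -/
def bR [NeZero m] (β : Finset (Fin n) → Lottery m) (q : Fin m) (S : Finset (Fin n)) : Fin m :=
  if h : ((β S).supp ∩ upSet q).Nonempty then ((β S).supp ∩ upSet q).min' h else lastAlt m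

/-- `b̂_S^L`: the `≺`-maximum of `supp(β_S) ∩ L` (with the convention `b̂_∅^L = a_1`). -/
def bL [NeZero m] (β : Finset (Fin n) → Lottery m) (p : Fin m) (S : Finset (Fin n)) : Fin m :=
  if h : ((β S).supp ∩ downSet p).Nonempty then ((β S).supp ∩ downSet p).max' h else 0

/-- `α = min over nonempty S ⊂ N of min(β_S(b̂_S^R)/|S|, β_S(b̂_S^L)/(n-|S|))`. -/
def alphaVal [NeZero m] (β : Finset (Fin n) → Lottery m) (p q : Fin m) : ℝ :=
  sInf {x : ℝ | ∃ S : Finset (Fin n), S.Nonempty ∧ S ≠ Finset.univ ∧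
    x = min ((β S).1 (bR β q S) / (S.card : ℝ))
            ((β S).1 (bL β p S) / ((n : ℝ) - (S.card : ℝ)))}

/-- `γ_S = (|S|/n) e_{b̂_S^R} + ((n-|S|)/n) e_{b̂_S^L}`, pointwise. -/
def gammaFun [NeZero m] (β : Finset (Fin n) → Lottery m) (p q : Fin m)
    (S : Finset (Fin n)) (a : Fin m) : ℝ :=
  ((S.card : ℝ) / (n : ℝ)) * (if a = bR β q S then 1 else 0)
  + (((n : ℝ) - (S.card : ℝ)) / (n : ℝ)) * (if a = bL β p S then 1 else 0)

/-- The max-min formula `f(P) = max_{S ⊆ N} min({r_1(P_j) : j ∈ S} ∪ {b_S})`. -/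
def fbrOutcome [NeZero m] {D : Set (Pref m)} (b : Finset (Fin n) → Fin m)
    (P : Profile D n) : Fin m :=
  Finset.univ.sup' Finset.univ_nonempty
    (fun S : Finset (Fin n) =>
      (insert (b S) (S.image (fun j => topOf (P j)))).inf' (Finset.insert_nonempty _ _) id)

/-- `f` is a `(p,q)`-fixed ballot rule with deterministic ballots `b` and constrained
dictator `i`. -/
def IsFBRWith [NeZero m] {D : Set (Pref m)} (p q : Fin m) (f : Profile D n → Fin m)
    (b : Finset (Fin n) → Fin m) (i : Fin n) : Prop :=
  b Finset.univ = lastAlt m ∧ b ∅ = 0 ∧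
  (∀ S T : Finset (Fin n), S ⊂ T → b S ≤ b T) ∧
  (∀ S : Finset (Fin n), (i ∈ S → q ≤ b S) ∧ (i ∉ S → b S ≤ p)) ∧
  ∀ P : Profile D n, f P = fbrOutcome b P

end PFBRPaper

open PFBRPaper


namespace PFBRPaper

section Separation

variable {V : Type*} {G : SimpleGraph V} {a b c u v w : V}

/-- The vertex `b` separates `u` from `v`: every walk from `u` to `v` meets `b`. The endpoints
are not excluded, so every vertex is separated by itself from every vertex. -/
def Separates (G : SimpleGraph V) (b u v : V) : Prop :=
  ∀ p : G.Walk u v, b ∈ p.support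

theorem Separates.symm (h : Separates G b u v) : Separates G b v u := fun p => by
  simpa using h p.reverse

theorem separates_self_left (u v : V) : Separates G u u v := fun p => p.start_mem_support

theorem Separates.left_or_right (h : Separates G b u w) (v : V) :
    Separates G b u v ∨ Separates G b v w := by
  by_contra! havoid
  obtain ⟨⟨p, hp⟩, ⟨q, hq⟩⟩ := havoid.imp not_forall.mp not_forall.mp
  exact ((p.mem_support_append_iff q).mp (h (p.append q))).elim hp hq

variable {p : G.Walk u v}

theorem separates_of_mem_support (hp : ∀ q : G.Walk u v, q.IsPath → q = p)
    (hb : b ∈ p.support) : Separates G b u v := by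
  classical
  intro q
  rw [← hp q.bypass q.bypass_isPath] at hb
  exact q.support_bypass_subset_support hb

theorem separates_or_separates_of_mem_darts (hp : ∀ q : G.Walk u v, q.IsPath → q = p)
    {d : G.Dart} (hd : d ∈ p.darts) (w : V) :
    Separates G d.snd u w ∨ Separates G d.fst w v := by
  classical
  by_contra! havoid
  obtain ⟨⟨q, hq⟩, ⟨r, hr⟩⟩ := havoid.imp not_forall.mp not_forall.mp
  have hedge : d.edge ∈ (q.append r).edges := by
    apply (q.append r).edges_bypass_subset_edges
    rw [hp _ (q.append r).bypass_isPath]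
    exact List.mem_map_of_mem hd
  rw [SimpleGraph.Walk.edges_append, List.mem_append] at hedge
  exact hedge.elim (fun h => hq (q.snd_mem_support_of_mem_edges h))
    (fun h => hr (r.fst_mem_support_of_mem_edges h))

variable [LinearOrder V]

theorem mem_support_of_separates_le (hp : ∀ q : G.Walk u v, q.IsPath → q = p)
    (hu : ∀ a b, Separates G b u a → b ≤ a) (hv : ∀ a b, Separates G b v a → a ≤ b) (t : V) :
    t ∈ p.support := by
  by_contra ht
  have hut : u < t := (hu t u (separates_self_left u t)).lt_of_ne
    fun h => ht (h ▸ p.start_mem_support)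
  have htv : t ≤ v := hv t v (separates_self_left v t)
  obtain ⟨d, hd, hfst : d.fst < t, hsnd : ¬ d.snd < t⟩ :=
    p.exists_boundary_dart (Set.Iio t) hut htv.not_gt
  have hne : t ≠ d.snd := fun h => ht (h ▸ p.dart_snd_mem_support_of_mem_darts hd)
  rcases separates_or_separates_of_mem_darts hp hd t with h | h
  · exact hsnd ((hu t d.snd h).lt_of_ne hne.symm)
  · exact (hv t d.fst h.symm).not_gt hfst

theorem separates_of_lt_of_lt (hp : ∀ q : G.Walk u v, q.IsPath → q = p)
    (hu : ∀ a b, Separates G b u a → b ≤ a) (hv : ∀ a b, Separates G b v a → a ≤ b)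
    (hcb : c < b) (hba : b < a) : Separates G b c a := by
  have huv : Separates G b u v :=
    separates_of_mem_support hp (mem_support_of_separates_le hp hu hv b)
  have hcv : Separates G b c v := (huv.left_or_right c).resolve_left fun h => (hu c b h).not_gt hcb
  exact (hcv.left_or_right a).resolve_right fun h => (hv a b h.symm).not_gt hba

end Separation

section Preferences

variable {m : ℕ} [NeZero m] {D : Set (Pref m)} {P P' : Pref m} {a b : Fin m}

theorem prefers_top (h : a ≠ P 0) : Prefers P (P 0) a := by
  have hpos : 0 < P.symm a := Fin.pos_iff_ne_zero.mpr fun h0 => h (P.symm_apply_eq.mp h0)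
  simpa only [Prefers, Equiv.symm_apply_apply] using hpos

theorem SinglePeaked.prefers (h : SinglePeaked P)
    (hab : a < b ∧ b ≤ P 0 ∨ P 0 ≤ b ∧ b < a) : Prefers P b a := by
  by_cases hb : b = P 0
  · subst hb
    exact prefers_top (hab.elim (fun h => h.1.ne) (fun h => h.2.ne'))
  · exact h a b (hab.imp (And.imp_right fun h => h.lt_of_ne hb)
      (And.imp_left fun h => h.lt_of_ne' hb))

theorem SinglePeaked.isHybridPref (h : SinglePeaked P) (p q : Fin m) : IsHybridPref p q P :=
  ⟨fun r s _ => h r s,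
    fun hp _ hpl _ hne => h.prefers (.inr ⟨hp, hpl.lt_of_ne' hne⟩),
    fun hq _ _ hlq hne => h.prefers (.inl ⟨hlq.lt_of_ne hne, hq⟩)⟩

/-- The graph `G_≈^A(D)` of strong connections on the set of all alternatives. -/
def connectionGraph (D : Set (Pref m)) : SimpleGraph (Fin m) where
  Adj := StronglyConnected D
  symm := ⟨fun _ _ ⟨hne, P, hP, P', hP', h0, h1, h0', h1', hrest⟩ =>
    ⟨hne.symm, P', hP', P, hP, h0', h1', h0, h1, fun k hk => (hrest k hk).symm⟩⟩
  loopless := ⟨fun _ h => h.1 rfl⟩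

theorem vertexPathBetween_iff {B : Set (Fin m)} {l : List (Fin m)} :
    VertexPathBetween D B a b l ↔
      ∃ p : (connectionGraph D).Walk a b, p.IsPath ∧ (∀ x ∈ p.support, x ∈ B) ∧
        p.support = l := by
  constructor
  · rintro ⟨⟨hne, hnodup, hB, hchain⟩, hhead, hlast⟩
    obtain rfl : l.head hne = a := Option.some.inj ((List.head?_eq_some_head hne).symm.trans hhead)
    obtain rfl : l.getLast hne = b :=
      Option.some.inj ((List.getLast?_eq_some_getLast hne).symm.trans hlast)
    have hsupp := SimpleGraph.Walk.support_ofSupport (G := connectionGraph D) hne hchain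
    exact ⟨.ofSupport l hne hchain, .mk' (by rwa [hsupp]), by rwa [hsupp], hsupp⟩
  · rintro ⟨p, hp, hB, rfl⟩
    refine ⟨⟨p.support_ne_nil, hp.support_nodup, hB, p.isChain_adj_support⟩, ?_, ?_⟩
    · rw [List.head?_eq_some_head p.support_ne_nil, p.head_support]
    · rw [List.getLast?_eq_some_getLast p.support_ne_nil, p.getLast_support]

theorem Adjacent.top_eq_or_adj (h : Adjacent P P') (hP : P ∈ D) (hP' : P' ∈ D) :
    P 0 = P' 0 ∨ (connectionGraph D).Adj (P 0) (P' 0) := by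
  obtain ⟨-, k, hk, hk₀, hk₁, hrest⟩ := h
  rcases k.eq_zero_or_pos with rfl | hpos
  · have hone : (⟨0 + 1, hk⟩ : Fin m) = 1 :=
      Fin.ext (by rw [Fin.val_one', Nat.mod_eq_of_lt hk])
    have hne : (1 : Fin m) ≠ 0 := by simp [← hone, Fin.ext_iff]
    rw [hone] at hk₀ hk₁
    change P 0 = P' 1 at hk₀
    refine .inr ⟨?_, P, hP, P', hP', rfl, hk₁, rfl, hk₀.symm, fun l hl => ?_⟩
    · rw [hk₀]
      exact P'.injective.ne hne
    · exact hrest l (by omega) (by omega)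
  · exact .inl (hrest 0 (by simp; omega) (by simp))

theorem Adjacent.top_eq_or_top_eq_of_separates (h : Adjacent P P') (hP : P ∈ D) (hP' : P' ∈ D)
    (hsep : Separates (connectionGraph D) b (P 0) (P' 0)) : P 0 = b ∨ P' 0 = b := by
  rcases h.top_eq_or_adj hP hP' with heq | hadj
  · rw [← heq] at hsep
    exact .inl (by simpa [eq_comm] using hsep .nil)
  · simpa [eq_comm] using hsep hadj.toWalk

theorem IsPath.exists_top_eq_of_separates {π : ℕ → Pref m} {v : ℕ} (h : IsPath D P P' π v)
    (hsep : Separates (connectionGraph D) b (P 0) (P' 0)) : ∃ i < v, π i 0 = b := by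
  obtain ⟨hv, hD, -, rfl, rfl, hadj⟩ := h
  have hprefix : ∀ i < v, Separates (connectionGraph D) b (π 0 0) (π i 0) →
      ∃ j ≤ i, π j 0 = b := by
    intro i
    induction i with
    | zero => exact fun _ hsep => ⟨0, le_rfl, by simpa [eq_comm] using hsep .nil⟩
    | succ i ih =>
      intro hi hsep
      rcases hsep.left_or_right (π i 0) with hsep | hsep
      · obtain ⟨j, hj, hjb⟩ := ih (by omega) hsep
        exact ⟨j, by omega, hjb⟩
      · rcases (hadj i hi).top_eq_or_top_eq_of_separates (hD i (by omega)) (hD _ hi) hsep with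
          hb | hb
        exacts [⟨i, by omega, hb⟩, ⟨i + 1, le_rfl, hb⟩]
  obtain ⟨i, hi, hib⟩ := hprefix (v - 1) (by omega) hsep
  exact ⟨i, by omega, hib⟩

theorem prefers_of_separates (hrich : MinimallyRich D) (hnr : NoRestorationDomain D) (hP : P ∈ D)
    (hne : a ≠ b) (hsep : Separates (connectionGraph D) b (P 0) a) : Prefers P b a := by
  by_contra hn
  have hab : Prefers P a b := (P.symm.injective.ne hne).lt_or_gt.resolve_right hn
  obtain ⟨P', hP', rfl⟩ := hrich a
  have hab' : Prefers P' (P' 0) b := prefers_top hne.symm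
  have hPP' : P ≠ P' := by
    rintro rfl
    exact hne (by simpa [eq_comm] using hsep .nil)
  obtain ⟨π, v, hpath, hπ⟩ := hnr P hP P' hP' hPP' (P' 0) b
  obtain ⟨i, hi, hib⟩ := hpath.exists_top_eq_of_separates hsep
  have hba : Prefers (π i) b (P' 0) := by
    rw [← hib]
    exact prefers_top (hib ▸ hne)
  obtain ⟨-, -, -, hfirst, hlast, -⟩ := hpath
  have hi₀ : i ≠ 0 := by
    rintro rfl
    exact hn (hfirst ▸ hba)
  have hi₁ : i ≠ v - 1 := by
    rintro rfl
    exact hab'.not_gt (hlast ▸ hba)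
  exact (hπ 0 i (v - 1) (by omega) (by omega) (by omega)).1
    ⟨hfirst.symm ▸ hab, hba, hlast.symm ▸ hab'⟩

theorem RegularDomain.le_of_separates_zero (hD : RegularDomain D)
    (hsep : Separates (connectionGraph D) b 0 a) : b ≤ a := by
  obtain ⟨hrich, ⟨hid, -⟩, hnr⟩ := hD
  rcases eq_or_ne a b with rfl | hne
  · exact le_rfl
  · exact (prefers_of_separates hrich hnr hid hne hsep).le

theorem RegularDomain.le_of_separates_lastAlt (hD : RegularDomain D)
    (hsep : Separates (connectionGraph D) b (lastAlt m) a) : a ≤ b := by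
  obtain ⟨hrich, ⟨-, hrev⟩, hnr⟩ := hD
  rcases eq_or_ne a b with rfl | hne
  · exact le_rfl
  · have htop : revPref m 0 = lastAlt m := Fin.ext (by simp [revPref, lastAlt])
    have hba : Prefers (revPref m) b a :=
      prefers_of_separates hrich hnr hrev hne (htop.symm ▸ hsep)
    exact (Fin.rev_lt_rev.mp hba).le

theorem singlePeaked_of_separates (hrich : MinimallyRich D) (hnr : NoRestorationDomain D)
    (hsep : ∀ a b c : Fin m, c < b → b < a → Separates (connectionGraph D) b c a) (hP : P ∈ D) :
    SinglePeaked P := by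
  rintro a b (⟨hab, hb⟩ | ⟨hb, hba⟩)
  · exact prefers_of_separates hrich hnr hP hab.ne (hsep _ _ _ hab hb).symm
  · exact prefers_of_separates hrich hnr hP hba.ne' (hsep _ _ _ hb hba)

end Preferences

end PFBRPaper

/-- If exactly one vertex-path of `G_≈^A(D)` connects `a_1` and `a_m`,
then the regular domain `D` is single-peaked w.r.t. `≺` and is a hybrid* domain. -/
theorem unique_path_single_peaked (m : ℕ) [NeZero m] (hm : 3 ≤ m)
    (D : Set (Pref m)) (hD : RegularDomain D)
    (huniq : ∃! l, VertexPathBetween D Set.univ 0 (lastAlt m) l) :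
    (∀ P ∈ D, SinglePeaked P) ∧ ∃ p q : Fin m, p < q ∧ IsHybridStar D p q := by
  obtain ⟨l, hl, hunique⟩ := huniq
  obtain ⟨p, -, -, rfl⟩ := vertexPathBetween_iff.mp hl
  have hp : ∀ q : (connectionGraph D).Walk 0 (lastAlt m), q.IsPath → q = p := fun q hq =>
    SimpleGraph.Walk.ext_support
      (hunique _ (vertexPathBetween_iff.mpr ⟨q, hq, fun _ _ => trivial, rfl⟩))
  have hfirst : ∀ a b, Separates (connectionGraph D) b 0 a → b ≤ a :=
    fun _ _ => hD.le_of_separates_zero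
  have hlast : ∀ a b, Separates (connectionGraph D) b (lastAlt m) a → a ≤ b :=
    fun _ _ => hD.le_of_separates_lastAlt
  have hpeaked : ∀ P ∈ D, SinglePeaked P := fun P =>
    singlePeaked_of_separates hD.1 hD.2.2 fun _ _ _ => separates_of_lt_of_lt hp hfirst hlast
  exact ⟨hpeaked, ⟨0, by omega⟩, ⟨1, by omega⟩, Fin.mk_lt_mk.mpr one_pos,
    fun P hP => (hpeaked P hP).isHybridPref _ _,
    fun k _ _ => ⟨p.support, hl, mem_support_of_separates_le hp hfirst hlast k⟩,
    fun h => (lt_irrefl _ h).elim⟩
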